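/- Let m ≥ 2 be an integer, let t_1, …, t_m be positive real numbers, let η > 0, C ≥ 0 and E > 0 be real numbers. Set b_v = η·(∑_{j=1}^m t_j)² + (∑_{j=1}^m t_j)·C, and for each j set b_j = η·t_j² + t_j·C. Then b_v/(b_v + E) > (∑_{j=1}^m b_j)/((∑_{j=1}^m b_j) + E). -/

import Mathlib

open Finset

/-!
Splitting keeps the linear part of the credits but loses the cross terms `t i * t j` of the
quadratic part. The credits are therefore strictly superadditive in the effort, while the winning
probability is strictly increasing in the credits.
-/

section PowSum

variable {ι R : Type*} [CommSemiring R] [PartialOrder R] [IsStrictOrderedRing R]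

theorem sum_pow_lt_pow_sum {s : Finset ι} {f : ι → R} {n : ℕ} {i j : ι} (hn : 1 < n)
    (hf : ∀ k ∈ s, 0 ≤ f k) (hi : i ∈ s) (hj : j ∈ s) (hij : i ≠ j)
    (hfi : 0 < f i) (hfj : 0 < f j) :
    ∑ k ∈ s, f k ^ n < (∑ k ∈ s, f k) ^ n := by
  obtain ⟨n, rfl⟩ := Nat.exists_eq_add_one.mpr (zero_lt_one.trans hn)
  have hn₀ : n ≠ 0 := by lia
  have f_le_sum : ∀ k ∈ s, f k ≤ ∑ l ∈ s, f l := fun k hk ↦ single_le_sum hf hk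
  have f_lt_sum : f i < ∑ l ∈ s, f l :=
    single_lt_sum hij.symm hi hj hfj fun k hk _ ↦ hf k hk
  simp only [pow_succ']
  rw [sum_mul]
  refine sum_lt_sum (fun k hk ↦ ?_) ⟨i, hi, ?_⟩
  · exact mul_le_mul_of_nonneg_left (pow_le_pow_left₀ (hf k hk) (f_le_sum k hk) n) (hf k hk)
  · exact mul_lt_mul_of_pos_left (pow_lt_pow_left₀ f_lt_sum hfi.le hn₀) hfi

end PowSum

section Credits

variable {R : Type*} [CommSemiring R]

/-- The virtual credits `η x² + x C` of a player with task effort `x` and discounted successor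
contribution `C`, where `η` is the initial-allowance parameter. -/
def virtualCredits (η C x : R) : R := η * x ^ 2 + x * C

variable [PartialOrder R] [IsStrictOrderedRing R]

theorem virtualCredits_nonneg {η C x : R} (hη : 0 ≤ η) (hC : 0 ≤ C) (hx : 0 ≤ x) :
    0 ≤ virtualCredits η C x :=
  add_nonneg (mul_nonneg hη (pow_nonneg hx 2)) (mul_nonneg hx hC)

theorem sum_virtualCredits_lt_virtualCredits_sum
    {ι : Type*} {s : Finset ι} {t : ι → R} {i j : ι} {η : R}
    (hη : 0 < η) (C : R) (ht : ∀ k ∈ s, 0 ≤ t k) (hi : i ∈ s) (hj : j ∈ s) (hij : i ≠ j)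
    (hti : 0 < t i) (htj : 0 < t j) :
    ∑ k ∈ s, virtualCredits η C (t k) < virtualCredits η C (∑ k ∈ s, t k) :=
  calc ∑ k ∈ s, virtualCredits η C (t k)
      = η * ∑ k ∈ s, t k ^ 2 + (∑ k ∈ s, t k) * C := by
        simp only [virtualCredits, sum_add_distrib, mul_sum, sum_mul]
    _ < η * (∑ k ∈ s, t k) ^ 2 + (∑ k ∈ s, t k) * C := by
        gcongr
        exact sum_pow_lt_pow_sum one_lt_two ht hi hj hij hti htj

end Credits

section WinProb

variable {K : Type*} [Field K]

/-- The probability, at noise factor `σ = 1`, that a party holding `b` credits wins against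
contestants holding `E` credits in total; it takes the junk value `0` when `b + E = 0`. -/
def winProb (E b : K) : K := b / (b + E)

variable [LinearOrder K] [IsStrictOrderedRing K]

theorem winProb_strictMonoOn {E : K} (hE : 0 < E) : StrictMonoOn (winProb E) (Set.Ioi (-E)) := by
  intro x hx y hy hxy
  have hxE : 0 < x + E := neg_lt_iff_pos_add.mp hx
  have hyE : 0 < y + E := neg_lt_iff_pos_add.mp hy
  rw [winProb, winProb, div_lt_div_iff₀ hxE hyE]
  linarith [mul_lt_mul_of_pos_right hxy hE, mul_comm x y]

theorem mwc_type2_prob_gt_general {ι : Type*} {s : Finset ι} {t : ι → K} {i j : ι} {η C E : K}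
    (hη : 0 < η) (hE : 0 < E) (ht : ∀ k ∈ s, 0 ≤ t k) (hi : i ∈ s) (hj : j ∈ s) (hij : i ≠ j)
    (hti : 0 < t i) (htj : 0 < t j) (hb : -E < ∑ k ∈ s, virtualCredits η C (t k)) :
    winProb E (∑ k ∈ s, virtualCredits η C (t k)) <
      winProb E (virtualCredits η C (∑ k ∈ s, t k)) :=
  have credits_lt := sum_virtualCredits_lt_virtualCredits_sum hη C ht hi hj hij hti htj
  winProb_strictMonoOn hE hb (hb.trans credits_lt) credits_lt

end WinProb

/-- Type-2 false-name attacks are unprofitable at noise factor `σ = 1`: the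
original node's winning probability strictly exceeds the total winning
probability of its parallel replicas. -/
theorem mwc_type2_prob_gt
    (m : ℕ) (hm : 2 ≤ m) (t : ℕ → ℝ) (ht : ∀ j ∈ Icc 1 m, 0 < t j)
    (eta : ℝ) (heta : 0 < eta) (C : ℝ) (hC : 0 ≤ C) (E : ℝ) (hE : 0 < E)
    (bv : ℝ)
    (hbv : bv = eta * (∑ j ∈ Icc 1 m, t j) ^ 2 + (∑ j ∈ Icc 1 m, t j) * C)
    (b : ℕ → ℝ) (hb : ∀ j ∈ Icc 1 m, b j = eta * (t j) ^ 2 + t j * C) :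
    bv / (bv + E)
      > (∑ j ∈ Icc 1 m, b j) / ((∑ j ∈ Icc 1 m, b j) + E) := by
  have h₁ : 1 ∈ Icc 1 m := mem_Icc.mpr ⟨le_rfl, one_le_two.trans hm⟩
  have h₂ : 2 ∈ Icc 1 m := mem_Icc.mpr ⟨one_le_two, hm⟩
  have ht_nonneg : ∀ j ∈ Icc 1 m, 0 ≤ t j := fun j hj ↦ (ht j hj).le
  have credits_nonneg : 0 ≤ ∑ j ∈ Icc 1 m, virtualCredits eta C (t j) :=
    sum_nonneg fun j hj ↦ virtualCredits_nonneg heta.le hC (ht_nonneg j hj)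
  rw [hbv, sum_congr rfl hb]
  exact mwc_type2_prob_gt_general heta hE ht_nonneg h₁ h₂ (by decide) (ht 1 h₁) (ht 2 h₂)
    ((neg_lt_zero.mpr hE).trans_le credits_nonneg)
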